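/- arXiv:2309.16612 — 2 statements merged into one kernel-verified Lean document; each statement's English description precedes it below -/
import Mathlib

section
/- Let R be a commutative ring, A an associative R-algebra, M an (A,A)-bimodule whose left and right A-actions are R-linear and commute with each other, and D : A → M an R-linear map satisfying the Leibniz rule D(ab) = a·D(b) + D(a)·b for all a, b ∈ A. Suppose z ∈ A and q ∈ R satisfy the twisted commutation relation z·D(z) = q • (D(z)·z) in M. Then for every positive integer k, D(z^k) = (k)_q • (D(z)·z^{k-1}), where (k)_q = 1 + q + q² + ⋯ + q^{k-1}. -/
open MulOpposite

/-- The q-Leibniz power rule in an (A,A)-bimodule: if `D` satisfies the Leibniz rule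
and `z·D(z) = q • (D(z)·z)`, then `D(z^k) = (k)_q • (D(z)·z^{k-1})`, where the right
A-action on the bimodule `M` is encoded as the `Aᵐᵒᵖ`-action. -/
theorem qLeibniz_power_rule_bimodule
    {R : Type*} [CommRing R] {A : Type*} [Ring A] [Algebra R A]
    {M : Type*} [AddCommGroup M] [Module R M]
    [Module A M] [Module Aᵐᵒᵖ M] [SMulCommClass A Aᵐᵒᵖ M]
    [IsScalarTower R A M] [IsScalarTower R Aᵐᵒᵖ M]
    (D : A →ₗ[R] M)
    (hD : ∀ a b : A, D (a * b) = a • D b + op b • D a)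
    (z : A) (q : R)
    (hz : z • D z = q • (op z • D z))
    (k : ℕ) (hk : 0 < k) :
    D (z ^ k) = (∑ i ∈ Finset.range k, q ^ i) • (op (z ^ (k - 1)) • D z) := by
  obtain ⟨n, rfl⟩ := Nat.exists_eq_succ_of_ne_zero hk.ne'
  clear hk
  simp only [Nat.succ_eq_add_one, Nat.add_sub_cancel]
  induction n with
  | zero => simp
  | succ n ih =>
    have hop : op (z ^ n) * op z = op (z ^ (n + 1)) := by rw [← op_mul, ← pow_succ']
    rw [pow_succ' z (n + 1), hD, ih, smul_comm z, smul_comm z, hz, smul_comm (op (z ^ n)) q,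
      ← mul_smul (op (z ^ n)), hop, ← mul_smul, geom_sum_succ (n := n + 1), add_smul, one_smul,
      mul_comm q]
end

section
/- Let R be a commutative ring, A an associative R-algebra, M an (A,A)-bimodule whose left and right A-actions are R-linear and commute with each other, and D : A → M an R-linear map satisfying D(ab) = a·D(b) + D(a)·b for all a, b ∈ A. Suppose z ∈ A and q ∈ R satisfy z·D(z) = q • (D(z)·z). If moreover G : M → N is a morphism of (A,A)-bimodules into a further such bimodule N, and there is an element κ ∈ N with G(D(z)) = κ·z and z·κ = κ·z, then for every positive integer k, G(D(z^k)) = (k)_q • (κ·z^k), where (k)_q = 1 + q + ⋯ + q^{k-1}. -/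
open MulOpposite

/-- If left multiplication by `z` on `m` is `q` times right multiplication, then left multiplication
by `z ^ k` is `q ^ k` times right multiplication by `z ^ k`. -/
theorem pow_smul_eq_pow_smul_op_pow_smul
    {R : Type*} [CommRing R] {A : Type*} [Ring A] [Algebra R A]
    {M : Type*} [AddCommGroup M] [Module R M]
    [Module A M] [Module Aᵐᵒᵖ M] [SMulCommClass A Aᵐᵒᵖ M]
    [IsScalarTower R A M] [IsScalarTower R Aᵐᵒᵖ M]
    {z : A} {q : R} {m : M} (hz : z • m = q • (op z • m)) (k : ℕ) :
    z ^ k • m = q ^ k • (op (z ^ k) • m) := by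
  have : SMulCommClass A R M := IsScalarTower.to_smulCommClass'
  have : SMulCommClass Aᵐᵒᵖ R M := IsScalarTower.to_smulCommClass'
  induction k with
  | zero => simp
  | succ k ih =>
    rw [pow_succ' z, mul_smul, ih, smul_comm z (q ^ k), smul_comm z (op (z ^ k)), hz,
      smul_comm (op (z ^ k)) q, smul_smul, smul_smul, ← op_mul, pow_succ q]

/-- The `q`-power rule: a Leibniz map with `z • D z = q • (op z • D z)` satisfies
`D (z ^ (k + 1)) = (k + 1)_q • (op (z ^ k) • D z)`. -/
theorem leibniz_pow_succ_eq_qinteger_smul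
    {R : Type*} [CommRing R] {A : Type*} [Ring A] [Algebra R A]
    {M : Type*} [AddCommGroup M] [Module R M]
    [Module A M] [Module Aᵐᵒᵖ M] [SMulCommClass A Aᵐᵒᵖ M]
    [IsScalarTower R A M] [IsScalarTower R Aᵐᵒᵖ M]
    {D : A → M} (hD : ∀ a b : A, D (a * b) = a • D b + op b • D a)
    {z : A} {q : R} (hz : z • D z = q • (op z • D z)) (k : ℕ) :
    D (z ^ (k + 1)) = (∑ i ∈ Finset.range (k + 1), q ^ i) • (op (z ^ k) • D z) := by
  have : SMulCommClass Aᵐᵒᵖ R M := IsScalarTower.to_smulCommClass'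
  induction k with
  | zero => simp
  | succ k ih =>
    rw [pow_succ z (k + 1), hD, ih, pow_smul_eq_pow_smul_op_pow_smul hz,
      Finset.sum_range_succ _ (k + 1), add_smul, add_comm, smul_comm (op z), smul_smul (op z),
      ← op_mul, ← pow_succ]

/-- Abstract curvature computation: with `D` a Leibniz-rule map into an
(A,A)-bimodule `M` satisfying the twisted relation `z·D(z) = q • (D(z)·z)`,
and `G : M → N` a bimodule morphism such that `G(D z) = κ·z` for some `κ ∈ N`
with `z·κ = κ·z`, one gets `G(D(z^k)) = (k)_q • (κ·z^k)` for all `k ≥ 1`.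
Right A-actions on the bimodules are encoded as `Aᵐᵒᵖ`-actions. -/
theorem curvature_qinteger_rescaling
    {R : Type*} [CommRing R] {A : Type*} [Ring A] [Algebra R A]
    {M : Type*} [AddCommGroup M] [Module R M]
    [Module A M] [Module Aᵐᵒᵖ M] [SMulCommClass A Aᵐᵒᵖ M]
    [IsScalarTower R A M] [IsScalarTower R Aᵐᵒᵖ M]
    {N : Type*} [AddCommGroup N] [Module R N]
    [Module A N] [Module Aᵐᵒᵖ N] [SMulCommClass A Aᵐᵒᵖ N]
    [IsScalarTower R A N] [IsScalarTower R Aᵐᵒᵖ N]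
    (D : A →ₗ[R] M)
    (hD : ∀ a b : A, D (a * b) = a • D b + op b • D a)
    (z : A) (q : R)
    (hz : z • D z = q • (op z • D z))
    (G : M →ₗ[R] N)
    (hGl : ∀ (a : A) (m : M), G (a • m) = a • G m)
    (hGr : ∀ (a : A) (m : M), G (op a • m) = op a • G m)
    (κ : N)
    (hκ : G (D z) = op z • κ)
    (hκz : z • κ = op z • κ)
    (k : ℕ) (hk : 0 < k) :
    G (D (z ^ k)) = (∑ i ∈ Finset.range k, q ^ i) • (op (z ^ k) • κ) := by
  obtain ⟨n, rfl⟩ := Nat.exists_eq_add_one.mpr hk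
  rw [leibniz_pow_succ_eq_qinteger_smul hD hz, map_smul, hGr, hκ, smul_smul (op (z ^ n)),
    ← op_mul, ← pow_succ']
end
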